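/- Let Φ be a continuous flow on a compact metric space and μ an ergodic Φ-invariant measure. Suppose there exists a Borel set H with μ(H) = 1 such that ρ̃_FK(x,y) = 0 for all x, y ∈ H. Then for every finite Borel partition P and every ε > 0 there exists t_0 > 1 such that K_t(15ε, P) = 1 for all t ≥ t_0; consequently e(Φ,u) = 0 for every positive non-decreasing surjection u: ℝ^+ → ℝ^+. -/

import Mathlib

open MeasureTheory Filter Set Topology
open scoped ENNReal symmDiff

section FK

structure IsFlow {X : Type*} [TopologicalSpace X] (Φ : ℝ → X → X) : Prop where
  cont : Continuous fun p : ℝ × X => Φ p.1 p.2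
  map_zero : ∀ x, Φ 0 x = x
  map_add : ∀ t s x, Φ (t + s) x = Φ s (Φ t x)

variable {X : Type*} [MetricSpace X]

/-- `x` and `y` are `(t,ε,δ)`-matchable: there are measurable `A, A' ⊆ [0,t]` of Lebesgue
measure `> (1-ε)t` and an increasing absolutely continuous onto map `h : A → A'`
(with a.e. derivative `h'`) with `|h' - 1| < ε` and `d(φ^s x, φ^{h s} y) < δ` on `A`. -/
def Matchable (Φ : ℝ → X → X) (x y : X) (t ε δ : ℝ) : Prop :=
  ∃ (A A' : Set ℝ) (h h' : ℝ → ℝ),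
    MeasurableSet A ∧ MeasurableSet A' ∧
    A ⊆ Icc 0 t ∧ A' ⊆ Icc 0 t ∧
    ENNReal.ofReal ((1 - ε) * t) < volume A ∧
    ENNReal.ofReal ((1 - ε) * t) < volume A' ∧
    MapsTo h A A' ∧ SurjOn h A A' ∧ StrictMonoOn h A ∧
    (∀ B ⊆ A, MeasurableSet B → volume (h '' B) = ENNReal.ofReal (∫ s in B, h' s)) ∧
    (∀ s ∈ A, |h' s - 1| < ε) ∧
    (∀ s ∈ A, dist (Φ s x) (Φ (h s) y) < δ)

/-- The `(t,δ)`-gap `f̃_{t,δ}(x,y)`; by convention it equals `1` when no matching exists. -/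
noncomputable def fkGap (Φ : ℝ → X → X) (t δ : ℝ) (x y : X) : ℝ :=
  sInf ({ε : ℝ | 0 < ε ∧ Matchable Φ x y t ε δ} ∪ {1})

/-- `f̃_δ(x,y) = limsup_{t → ∞} f̃_{t,δ}(x,y)`. -/
noncomputable def fkDist (Φ : ℝ → X → X) (δ : ℝ) (x y : X) : ℝ :=
  Filter.limsup (fun t => fkGap Φ t δ x y) Filter.atTop

/-- The Feldman–Katok pseudometric for flows. -/
noncomputable def rhoFK (Φ : ℝ → X → X) (x y : X) : ℝ :=
  sInf {δ : ℝ | 0 < δ ∧ fkDist Φ δ x y < δ}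

/-- Discrete `(n,δ)`-matching of cardinality `k` for a map `T`. -/
def DMatching (T : X → X) (x y : X) (n : ℕ) (δ : ℝ) (k : ℕ) : Prop :=
  ∃ (D D' : Finset ℕ) (π : ℕ → ℕ),
    D ⊆ Finset.range n ∧ D' ⊆ Finset.range n ∧ D.card = k ∧
    Set.BijOn π ↑D ↑D' ∧ StrictMonoOn π ↑D ∧
    ∀ i ∈ D, dist (T^[i] x) (T^[π i] y) < δ

/-- The discrete `(n,δ)`-gap `f̄_{n,δ}(x,y)`. -/
noncomputable def dGap (T : X → X) (n : ℕ) (δ : ℝ) (x y : X) : ℝ :=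
  1 - ((sSup {k : ℕ | DMatching T x y n δ k} : ℕ) : ℝ) / n

/-- `f̄_δ(x,y) = limsup_{n → ∞} f̄_{n,δ}(x,y)`. -/
noncomputable def dFKdist (T : X → X) (δ : ℝ) (x y : X) : ℝ :=
  Filter.limsup (fun n : ℕ => dGap T n δ x y) Filter.atTop

/-- The discrete Feldman–Katok pseudometric. -/
noncomputable def dRhoFK (T : X → X) (x y : X) : ℝ :=
  sInf {δ : ℝ | 0 < δ ∧ dFKdist T δ x y ≤ δ}

variable [MeasurableSpace X] [BorelSpace X]

/-- The `t`-empirical measure `μ_{x,t} = (1/t) ∫_0^t δ_{φ^s x} ds`. -/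
noncomputable def empMeasure (Φ : ℝ → X → X) (x : X) (t : ℝ) : Measure X :=
  (ENNReal.ofReal (1 / t)) • Measure.map (fun s => Φ s x) (volume.restrict (Icc 0 t))

/-- `x` is generic for `μ`: empirical measures converge to `μ` in the weak* topology. -/
def Generic (Φ : ℝ → X → X) (μ : Measure X) (x : X) : Prop :=
  ∀ f : C(X, ℝ), Tendsto (fun t => ∫ z, f z ∂(empMeasure Φ x t)) atTop (𝓝 (∫ z, f z ∂μ))

def FlowInvariant (Φ : ℝ → X → X) (μ : Measure X) : Prop :=
  ∀ t : ℝ, MeasurePreserving (Φ t) μ μ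

def FlowErgodic (Φ : ℝ → X → X) (μ : Measure X) : Prop :=
  FlowInvariant Φ μ ∧
    ∀ A : Set X, MeasurableSet A → (∀ t, Φ t ⁻¹' A = A) → μ A = 0 ∨ μ A = 1

/-- The Prokhorov metric. -/
noncomputable def prokhorov (μ ν : Measure X) : ℝ :=
  sInf {ε : ℝ | 0 < ε ∧ ∀ B : Set X, MeasurableSet B →
    μ B ≤ ν (Metric.thickening ε B) + ENNReal.ofReal ε}

/-- A finite Borel partition of `X`, indexed by `ℕ` with all but finitely many cells empty. -/
structure BPartition (X : Type*) [MeasurableSpace X] where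
  cells : ℕ → Set X
  measurable : ∀ j, MeasurableSet (cells j)
  disj : Pairwise (Function.onFun Disjoint cells)
  cover : ⋃ j, cells j = Set.univ
  finite : ∃ n, ∀ j, n ≤ j → cells j = ∅

/-- The partition pseudometric `d_μ(P,Q)` (infimum over orderings of
`μ {x : P(x) ≠ Q(x)}`). -/
noncomputable def dPart (μ : Measure X) (P Q : ℕ → Set X) : ℝ :=
  ⨅ σ : Equiv.Perm ℕ, (μ (⋃ j, P j \ Q (σ j))).toReal

/-- `(t,ε,P)`-matchability with respect to a partition `P` (Ratner). -/
def PMatchable (Φ : ℝ → X → X) (P : ℕ → Set X) (x y : X) (t ε : ℝ) : Prop :=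
  ∃ (A A' : Set ℝ) (h h' : ℝ → ℝ),
    MeasurableSet A ∧ MeasurableSet A' ∧
    A ⊆ Icc 0 t ∧ A' ⊆ Icc 0 t ∧
    ENNReal.ofReal ((1 - ε) * t) < volume A ∧
    ENNReal.ofReal ((1 - ε) * t) < volume A' ∧
    MapsTo h A A' ∧ SurjOn h A A' ∧ StrictMonoOn h A ∧
    (∀ B ⊆ A, MeasurableSet B → volume (h '' B) = ENNReal.ofReal (∫ s in B, h' s)) ∧
    (∀ s ∈ A, |h' s - 1| < ε) ∧
    (∀ s ∈ A, ∀ j, Φ s x ∈ P j ↔ Φ (h s) y ∈ P j)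

/-- `f_t(x,y,P)`. -/
noncomputable def fPart (Φ : ℝ → X → X) (P : ℕ → Set X) (t : ℝ) (x y : X) : ℝ :=
  sInf ({ε : ℝ | 0 < ε ∧ PMatchable Φ P x y t ε} ∪ {1})

/-- The `(t,P)`-ball of radius `ε` centered at `x`. -/
def PBall (Φ : ℝ → X → X) (P : ℕ → Set X) (t ε : ℝ) (x : X) : Set X :=
  {y | fPart Φ P t x y < ε}

/-- `K_t(ε,P)`: minimal cardinality of an `(ε,t,P)`-cover (`⊤` if none exists). -/
noncomputable def Kt (μ : Measure X) (Φ : ℝ → X → X) (P : ℕ → Set X) (ε t : ℝ) : ℝ≥0∞ :=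
  sInf ((fun C : Finset X => (C.card : ℝ≥0∞)) ''
    {C : Finset X | ENNReal.ofReal (1 - ε) < μ (⋃ x ∈ C, PBall Φ P t ε x)})

/-- `β(u,ε,P) = liminf_{t→∞} log K_t(ε,P) / u(t)`. -/
noncomputable def betaU (μ : Measure X) (Φ : ℝ → X → X) (P : ℕ → Set X) (u : ℝ → ℝ)
    (ε : ℝ) : EReal :=
  Filter.liminf (fun t => ENNReal.log (Kt μ Φ P ε t) / (ENNReal.ofReal (u t) : EReal))
    Filter.atTop

/-- `e(u,P) = limsup_{ε→0⁺} β(u,ε,P)`. -/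
noncomputable def eUP (μ : Measure X) (Φ : ℝ → X → X) (P : ℕ → Set X) (u : ℝ → ℝ) : EReal :=
  Filter.limsup (fun ε => betaU μ Φ P u ε) (𝓝[>] (0 : ℝ))

/-- `e(Φ,u) = sup_P e(u,P)`. -/
noncomputable def ePhi (μ : Measure X) (Φ : ℝ → X → X) (u : ℝ → ℝ) : EReal :=
  ⨆ P : BPartition X, eUP μ Φ P.cells u

end FK


/-- A time change on `A`: a monotone map `h`, strictly increasing on `A`, which on `A` is
absolutely continuous with measurable density `h'` satisfying `|h' - 1| < δ` everywhere. -/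
structure IsTimeChange (A : Set ℝ) (h h' : ℝ → ℝ) (δ : ℝ) : Prop where
  measurableSet : MeasurableSet A
  monotone : Monotone h
  strictMonoOn : StrictMonoOn h A
  measurable_density : Measurable h'
  abs_density_sub_one_lt : ∀ s, |h' s - 1| < δ
  volume_image : ∀ B ⊆ A, MeasurableSet B →
    volume (h '' B) = ∫⁻ s in B, ENNReal.ofReal (h' s)

namespace IsTimeChange

variable {A B C : Set ℝ} {h h' g g' : ℝ → ℝ} {δ : ℝ}

theorem measurable (H : IsTimeChange A h h' δ) : Measurable h := H.monotone.measurable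

theorem injOn (H : IsTimeChange A h h' δ) : InjOn h A := H.strictMonoOn.injOn

theorem mono (H : IsTimeChange A h h' δ) (hCA : C ⊆ A) (hC : MeasurableSet C) :
    IsTimeChange C h h' δ :=
  ⟨hC, H.monotone, H.strictMonoOn.mono hCA, H.measurable_density, H.abs_density_sub_one_lt,
    fun B hB => H.volume_image B (hB.trans hCA)⟩

theorem measurableSet_image (H : IsTimeChange A h h' δ) : MeasurableSet (h '' A) :=
  H.measurableSet.image_of_measurable_injOn H.measurable H.injOn

theorem one_sub_lt_density (H : IsTimeChange A h h' δ) (s : ℝ) : 1 - δ < h' s := by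
  have := (abs_lt.1 (H.abs_density_sub_one_lt s)).1
  linarith

theorem le_volume_image (H : IsTimeChange A h h' δ) :
    ENNReal.ofReal (1 - δ) * volume A ≤ volume (h '' A) := by
  rw [H.volume_image A Subset.rfl H.measurableSet, ← setLIntegral_const]
  exact lintegral_mono fun s => ENNReal.ofReal_le_ofReal (H.one_sub_lt_density s).le

theorem map_withDensity (H : IsTimeChange A h h' δ) :
    ((volume.restrict A).withDensity fun s => ENNReal.ofReal (h' s)).map h =
      volume.restrict (h '' A) := by
  ext S hS
  have hpre := H.measurable hS
  rw [Measure.map_apply H.measurable hS, withDensity_apply _ hpre, Measure.restrict_restrict hpre,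
    ← H.volume_image _ inter_subset_right (hpre.inter H.measurableSet),
    Measure.restrict_apply hS, image_preimage_inter]

theorem lintegral_image (H : IsTimeChange A h h' δ) {F : ℝ → ℝ≥0∞} (hF : Measurable F) :
    ∫⁻ u in h '' A, F u = ∫⁻ s in A, ENNReal.ofReal (h' s) * F (h s) := by
  rw [← H.map_withDensity, lintegral_map hF H.measurable]
  exact lintegral_withDensity_eq_lintegral_mul _ H.measurable_density.ennreal_ofReal
    (hF.comp H.measurable)

/-- A bounded set carrying a time change has a globally monotone left inverse of it. -/
theorem exists_monotone_leftInvOn (H : IsTimeChange A h h' δ) {t : ℝ} (hA : A ⊆ Icc 0 t) :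
    ∃ k : ℝ → ℝ, Monotone k ∧ LeftInvOn k h A := by
  have hinv := H.injOn.leftInvOn_invFunOn
  have him : Function.invFunOn h A '' (h '' A) = A := H.injOn.invFunOn_image Subset.rfl
  have hmono : MonotoneOn (Function.invFunOn h A) (h '' A) := by
    rintro _ ⟨a, ha, rfl⟩ _ ⟨b, hb, rfl⟩ hab
    rw [hinv ha, hinv hb]
    exact (H.strictMonoOn.le_iff_le ha hb).1 hab
  obtain ⟨k, hk, hke⟩ := hmono.exists_monotone_extension
    (by rw [him]; exact bddBelow_Icc.mono hA) (by rw [him]; exact bddAbove_Icc.mono hA)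
  exact ⟨k, hk, fun a ha => by rw [← hke (mem_image_of_mem h ha), hinv ha]⟩

/-- The transition map `g ∘ h⁻¹` between two time changes of the same set. -/
theorem volume_image_transition (H : IsTimeChange A h h' δ) (G : IsTimeChange A g g' δ)
    (hδ : δ < 1) {k : ℝ → ℝ} (hk : Monotone k) (hkA : LeftInvOn k h A)
    (hB : B ⊆ h '' A) (hBm : MeasurableSet B) :
    volume ((g ∘ k) '' B) = ∫⁻ u in B, ENNReal.ofReal (g' (k u) / h' (k u)) := by
  have hCm : MeasurableSet (A ∩ h ⁻¹' B) := H.measurableSet.inter (H.measurable hBm)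
  have hBC : B = h '' (A ∩ h ⁻¹' B) := by
    rw [image_inter_preimage, inter_eq_right.2 hB]
  have himage : (g ∘ k) '' B = g '' (A ∩ h ⁻¹' B) := by
    conv_lhs => rw [hBC, image_image]
    exact image_congr fun s hs => by simp [hkA hs.1]
  have hF : Measurable fun u => ENNReal.ofReal (g' (k u) / h' (k u)) :=
    ((G.measurable_density.comp hk.measurable).div
      (H.measurable_density.comp hk.measurable)).ennreal_ofReal
  rw [himage, G.volume_image _ inter_subset_left hCm]
  conv_rhs => rw [hBC]
  rw [(H.mono inter_subset_left hCm).lintegral_image hF]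
  refine setLIntegral_congr_fun hCm fun s hs => ?_
  have hpos : 0 < h' s := by linarith [H.one_sub_lt_density s]
  simp only [hkA hs.1]
  rw [← ENNReal.ofReal_mul hpos.le, mul_div_cancel₀ _ hpos.ne']

theorem abs_div_density_sub_one_lt (H : IsTimeChange A h h' δ) (G : IsTimeChange B g g' δ)
    (hδ : δ ≤ 1 / 2) (s : ℝ) : |g' s / h' s - 1| < 4 * δ := by
  have h0 := abs_lt.1 (H.abs_density_sub_one_lt s)
  have g0 := abs_lt.1 (G.abs_density_sub_one_lt s)
  have hpos : 0 < h' s := by linarith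
  rw [div_sub_one hpos.ne', abs_div, abs_of_pos hpos, div_lt_iff₀ hpos, abs_lt]
  constructor <;> nlinarith

/-- The part of `A` sent into `S` is not much larger than `S`. -/
theorem volume_inter_preimage_le (H : IsTimeChange A h h' δ) (hδ : δ ≤ 1 / 2) {S : Set ℝ}
    (hS : MeasurableSet S) : volume (A ∩ h ⁻¹' S) ≤ 2 * volume S := by
  have hCm : MeasurableSet (A ∩ h ⁻¹' S) := H.measurableSet.inter (H.measurable hS)
  have h1 := (H.mono inter_subset_left hCm).le_volume_image
  have h2 : volume (h '' (A ∩ h ⁻¹' S)) ≤ volume S :=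
    measure_mono (image_inter_preimage h A S ▸ inter_subset_right)
  have h3 : (2 : ℝ≥0∞)⁻¹ ≤ ENNReal.ofReal (1 - δ) := by
    rw [← ENNReal.ofReal_ofNat, ← ENNReal.ofReal_inv_of_pos two_pos]
    exact ENNReal.ofReal_le_ofReal (by linarith)
  have h4 : (2 : ℝ≥0∞)⁻¹ * volume (A ∩ h ⁻¹' S) ≤ volume S :=
    (mul_le_mul_left h3 _).trans (h1.trans h2)
  calc volume (A ∩ h ⁻¹' S) = 2 * (2⁻¹ * volume (A ∩ h ⁻¹' S)) := by
        rw [← mul_assoc, ENNReal.mul_inv_cancel two_ne_zero ENNReal.ofNat_ne_top, one_mul]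
    _ ≤ 2 * volume S := mul_le_mul_right h4 _

end IsTimeChange

/-- Any matching of time sets can be normalized to a time change with the same graph. -/
theorem exists_isTimeChange {A A' : Set ℝ} {h h' : ℝ → ℝ} {t δ : ℝ} (hδ0 : 0 < δ) (hδ : δ < 1)
    (hA : MeasurableSet A) (hA' : A' ⊆ Icc 0 t)
    (hvol : ENNReal.ofReal ((1 - δ) * t) < volume A')
    (hmaps : MapsTo h A A') (hsurj : SurjOn h A A') (hstrict : StrictMonoOn h A)
    (hac : ∀ B ⊆ A, MeasurableSet B → volume (h '' B) = ENNReal.ofReal (∫ s in B, h' s))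
    (hbound : ∀ s ∈ A, |h' s - 1| < δ) :
    ∃ g g' : ℝ → ℝ, IsTimeChange A g g' δ ∧ EqOn h g A := by
  have himage : h '' A = A' := hsurj.image_eq_of_mapsTo hmaps
  obtain ⟨g, hg, hge⟩ := hstrict.monotoneOn.exists_monotone_extension
    (by rw [himage]; exact bddBelow_Icc.mono hA') (by rw [himage]; exact bddAbove_Icc.mono hA')
  have hint : IntegrableOn h' A := by
    by_contra hn
    have h0 := hac A Subset.rfl hA
    rw [integral_undef hn, himage] at h0
    simp [h0] at hvol
  have hball : ∀ᵐ s ∂(volume.restrict A), h' s ∈ Ioo (1 - δ) (1 + δ) := by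
    filter_upwards [ae_restrict_mem hA] with s hs
    have := abs_lt.1 (hbound s hs)
    exact ⟨by linarith, by linarith⟩
  obtain ⟨g', hg'm, hg'r, hg'e⟩ := hint.aemeasurable.exists_ae_eq_range_subset hball
    ⟨1, by linarith, by linarith⟩
  refine ⟨g, g', ⟨hA, hg, hstrict.congr hge, hg'm, fun s => ?_, fun B hB hBm => ?_⟩, hge⟩
  · have := hg'r (mem_range_self s)
    exact abs_lt.2 ⟨by linarith [this.1], by linarith [this.2]⟩
  · have heq : h' =ᵐ[volume.restrict B] g' := ae_restrict_of_ae_restrict_of_subset hB hg'e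
    rw [← (hge.mono hB).image_eq, hac B hB hBm, integral_congr_ae heq,
      ofReal_integral_eq_lintegral_ofReal ((hint.mono_set hB).congr_fun_ae heq)]
    refine ae_of_all _ fun s => ?_
    have := hg'r (mem_range_self s)
    exact (by linarith : (0 : ℝ) ≤ 1 - δ).trans this.1.le

section Matching

variable {X : Type*} [MetricSpace X] {Φ : ℝ → X → X}

theorem IsFlow.continuous_orbit (hΦ : IsFlow Φ) (x : X) : Continuous fun s => Φ s x :=
  hΦ.cont.comp (continuous_id.prodMk continuous_const)

theorem Matchable.mono {x y : X} {t ε ε' δ δ' : ℝ} (ht : 0 ≤ t) (hε : ε ≤ ε') (hδ : δ ≤ δ')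
    (hM : Matchable Φ x y t ε δ) : Matchable Φ x y t ε' δ' := by
  obtain ⟨A, A', h, h', hA, hA', hAt, hAt', hv, hv', hmaps, hsurj, hmono, hac, hb, hd⟩ := hM
  have hle : ENNReal.ofReal ((1 - ε') * t) ≤ ENNReal.ofReal ((1 - ε) * t) :=
    ENNReal.ofReal_le_ofReal (mul_le_mul_of_nonneg_right (by linarith) ht)
  exact ⟨A, A', h, h', hA, hA', hAt, hAt', hle.trans_lt hv, hle.trans_lt hv', hmaps, hsurj, hmono,
    hac, fun s hs => (hb s hs).trans_le hε, fun s hs => (hd s hs).trans_le hδ⟩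

theorem Matchable.exists_isTimeChange {x y : X} {t δ ε : ℝ} (hδ0 : 0 < δ) (hδ : δ < 1)
    (hM : Matchable Φ x y t δ ε) :
    ∃ (A : Set ℝ) (h h' : ℝ → ℝ), IsTimeChange A h h' δ ∧ A ⊆ Icc 0 t ∧ MapsTo h A (Icc 0 t) ∧
      ENNReal.ofReal ((1 - δ) * t) < volume A ∧ ∀ s ∈ A, dist (Φ s x) (Φ (h s) y) < ε := by
  obtain ⟨A, A', h, h', hA, -, hAt, hAt', hv, hv', hmaps, hsurj, hmono, hac, hb, hd⟩ := hM
  obtain ⟨g, g', hg, hge⟩ :=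
    _root_.exists_isTimeChange hδ0 hδ hA hAt' hv' hmaps hsurj hmono hac hb
  exact ⟨A, g, g', hg, hAt, fun s hs => hge hs ▸ hAt' (hmaps hs), hv,
    fun s hs => hge hs ▸ hd s hs⟩

theorem volume_Icc_diff_le {A : Set ℝ} {t δ : ℝ} (ht : 0 ≤ t) (hδ0 : 0 ≤ δ) (hδ : δ ≤ 1)
    (hA : MeasurableSet A) (hAt : A ⊆ Icc 0 t) (hv : ENNReal.ofReal ((1 - δ) * t) < volume A) :
    volume (Icc 0 t \ A) ≤ ENNReal.ofReal (δ * t) := by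
  have hfin : volume A ≠ ∞ := ((measure_mono hAt).trans_lt (by simp)).ne
  rw [measure_sdiff hAt hA.nullMeasurableSet hfin, Real.volume_Icc, sub_zero, tsub_le_iff_right]
  refine le_trans ?_ (add_le_add le_rfl hv.le)
  rw [← ENNReal.ofReal_add (by positivity) (mul_nonneg (by linarith) ht)]
  exact ENNReal.ofReal_le_ofReal (by linarith)

/-- Two points matchable with a common point `z`, whose orbits mostly stay in a set `K` on which
the partition `P` is constant at scale `2 * δ`, are matchable with respect to `P`. -/
theorem pMatchable_of_matchable_of_matchable (hΦ : IsFlow Φ) [MeasurableSpace X] [BorelSpace X]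
    {P : ℕ → Set X} {K : Set X} {x y z : X} {t δ b η : ℝ} (ht : 0 < t) (hδ0 : 0 < δ)
    (hδ : δ ≤ 1 / 2) (hb : 0 ≤ b) (hη : η ≤ 1) (hη1 : 3 * δ + 4 * b < η) (hη2 : 4 * δ ≤ η)
    (hK : MeasurableSet K)
    (hsep : ∀ p ∈ K, ∀ q ∈ K, dist p q < 2 * δ → ∀ j, p ∈ P j ↔ q ∈ P j)
    (hx : Matchable Φ z x t δ δ) (hy : Matchable Φ z y t δ δ)
    (hxK : volume {s ∈ Icc 0 t | Φ s x ∉ K} ≤ ENNReal.ofReal (b * t))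
    (hyK : volume {s ∈ Icc 0 t | Φ s y ∉ K} ≤ ENNReal.ofReal (b * t)) :
    PMatchable Φ P x y t η := by
  have hδ1 : δ < 1 := by linarith
  obtain ⟨A₁, h, h', H, hA₁, hh, hv₁, hd₁⟩ := hx.exists_isTimeChange hδ0 hδ1
  obtain ⟨A₂, g, g', G, hA₂, hg, hv₂, hd₂⟩ := hy.exists_isTimeChange hδ0 hδ1
  set Sx := {s ∈ Icc 0 t | Φ s x ∉ K}
  set Sy := {s ∈ Icc 0 t | Φ s y ∉ K}
  have hSx : MeasurableSet Sx :=
    measurableSet_Icc.inter ((hΦ.continuous_orbit x).measurable hK.compl)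
  have hSy : MeasurableSet Sy :=
    measurableSet_Icc.inter ((hΦ.continuous_orbit y).measurable hK.compl)
  set C := (A₁ ∩ A₂) \ (h ⁻¹' Sx ∪ g ⁻¹' Sy)
  have hCm : MeasurableSet C := (H.measurableSet.inter G.measurableSet).diff
    ((H.measurable hSx).union (G.measurable hSy))
  have hC₁ : C ⊆ A₁ := fun s hs => hs.1.1
  have hC₂ : C ⊆ A₂ := fun s hs => hs.1.2
  have HC := H.mono hC₁ hCm
  have GC := G.mono hC₂ hCm
  have hvolC : ENNReal.ofReal ((1 - 2 * δ - 4 * b) * t) ≤ volume C := by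
    have hcov : Icc 0 t ⊆ C ∪ (Icc 0 t \ A₁) ∪ (Icc 0 t \ A₂) ∪ (A₁ ∩ h ⁻¹' Sx) ∪
        (A₂ ∩ g ⁻¹' Sy) := by
      intro s hs
      simp only [C, mem_union, Set.mem_sdiff, mem_inter_iff]
      tauto
    have htwo : ∀ {S : Set ℝ}, volume S ≤ ENNReal.ofReal (b * t) →
        2 * volume S ≤ ENNReal.ofReal (2 * b * t) := fun hS => by
      rw [mul_assoc, ENNReal.ofReal_mul two_pos.le, ENNReal.ofReal_ofNat]
      exact mul_le_mul_right hS _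
    have h1 := calc ENNReal.ofReal t = volume (Icc 0 t) := by simp
      _ ≤ volume C + volume (Icc 0 t \ A₁) + volume (Icc 0 t \ A₂) + volume (A₁ ∩ h ⁻¹' Sx) +
          volume (A₂ ∩ g ⁻¹' Sy) := by
        refine (measure_mono hcov).trans ((measure_union_le _ _).trans ?_)
        gcongr
        refine (measure_union_le _ _).trans ?_
        gcongr
        refine (measure_union_le _ _).trans ?_
        gcongr
        exact measure_union_le _ _
      _ ≤ volume C + ENNReal.ofReal (δ * t) + ENNReal.ofReal (δ * t) +
          ENNReal.ofReal (2 * b * t) + ENNReal.ofReal (2 * b * t) := by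
        gcongr
        · exact volume_Icc_diff_le ht.le hδ0.le hδ1.le H.measurableSet hA₁ hv₁
        · exact volume_Icc_diff_le ht.le hδ0.le hδ1.le G.measurableSet hA₂ hv₂
        · exact (H.volume_inter_preimage_le hδ hSx).trans (htwo hxK)
        · exact (G.volume_inter_preimage_le hδ hSy).trans (htwo hyK)
      _ = volume C + ENNReal.ofReal ((2 * δ + 4 * b) * t) := by
        rw [add_assoc, add_assoc, add_assoc, ← ENNReal.ofReal_add (by positivity) (by positivity),
          ← ENNReal.ofReal_add (by positivity) (by positivity),
          ← ENNReal.ofReal_add (by positivity) (by positivity)]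
        ring_nf
    rw [← tsub_le_iff_right, ← ENNReal.ofReal_sub _ (by positivity)] at h1
    have heq : (1 - 2 * δ - 4 * b) * t = t - (2 * δ + 4 * b) * t := by ring
    rwa [heq]
  have hlarge : ENNReal.ofReal ((1 - η) * t) < ENNReal.ofReal (1 - δ) * volume C := by
    refine lt_of_lt_of_le ?_ (mul_le_mul_right hvolC _)
    rw [← ENNReal.ofReal_mul (by linarith)]
    have hlt : (1 - η) * t < (1 - δ) * ((1 - 2 * δ - 4 * b) * t) := by
      rw [← mul_assoc]
      refine mul_lt_mul_of_pos_right ?_ ht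
      nlinarith [mul_nonneg hδ0.le hb]
    refine (ENNReal.ofReal_lt_ofReal_iff ?_).2 hlt
    exact (mul_nonneg (by linarith) ht.le).trans_lt hlt
  obtain ⟨k, hk, hkC⟩ := HC.exists_monotone_leftInvOn (hC₁.trans hA₁)
  have hbound : ∀ u, |g' (k u) / h' (k u) - 1| < 4 * δ := fun u =>
    H.abs_div_density_sub_one_lt G hδ (k u)
  refine ⟨h '' C, g '' C, g ∘ k, fun u => g' (k u) / h' (k u), HC.measurableSet_image,
    GC.measurableSet_image, (hh.mono_left hC₁).image_subset, (hg.mono_left hC₂).image_subset,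
    hlarge.trans_le HC.le_volume_image, hlarge.trans_le GC.le_volume_image, ?_, ?_, ?_, ?_,
    fun u _ => (hbound u).trans_le hη2, ?_⟩
  · rintro _ ⟨s, hs, rfl⟩
    exact ⟨s, hs, by simp [hkC hs]⟩
  · rintro _ ⟨s, hs, rfl⟩
    exact ⟨h s, mem_image_of_mem h hs, by simp [hkC hs]⟩
  · rintro _ ⟨s, hs, rfl⟩ _ ⟨r, hr, rfl⟩ hsr
    simp only [Function.comp_apply, hkC hs, hkC hr]
    exact GC.strictMonoOn hs hr ((HC.strictMonoOn.lt_iff_lt hs hr).1 hsr)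
  · intro B hB hBm
    have hBfin : volume B ≠ ∞ := ((measure_mono (hB.trans
      (hh.mono_left hC₁).image_subset)).trans_lt (by simp)).ne
    have hmeas : Measurable fun u => g' (k u) / h' (k u) :=
      (G.measurable_density.comp hk.measurable).div (H.measurable_density.comp hk.measurable)
    rw [HC.volume_image_transition GC hδ1 hk hkC hB hBm, ofReal_integral_eq_lintegral_ofReal]
    · refine Measure.integrableOn_of_bounded (M := 1 + 4 * δ) hBfin hmeas.aestronglyMeasurable
        (ae_of_all _ fun u => ?_)
      have := abs_lt.1 (hbound u)
      exact abs_le.2 ⟨by linarith, by linarith⟩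
    · refine ae_of_all _ fun u => div_nonneg ?_ ?_
      · linarith [G.one_sub_lt_density (k u)]
      · linarith [H.one_sub_lt_density (k u)]
  · rintro _ ⟨s, hs, rfl⟩
    simp only [Function.comp_apply, hkC hs]
    have hxs : Φ (h s) x ∈ K := by
      by_contra hn
      exact hs.2 (Or.inl ⟨hh (hC₁ hs), hn⟩)
    have hys : Φ (g s) y ∈ K := by
      by_contra hn
      exact hs.2 (Or.inr ⟨hg (hC₂ hs), hn⟩)
    refine hsep _ hxs _ hys ?_
    have := dist_triangle_left (Φ (h s) x) (Φ (g s) y) (Φ s z)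
    linarith [hd₁ s (hC₁ hs), hd₂ s (hC₂ hs)]

theorem fkGap_nonneg (t δ : ℝ) (x y : X) : 0 ≤ fkGap Φ t δ x y :=
  Real.sInf_nonneg fun _ he => he.elim (fun h => h.1.le) fun h => h ▸ zero_le_one

theorem fkGap_le_one (t δ : ℝ) (x y : X) : fkGap Φ t δ x y ≤ 1 :=
  csInf_le ⟨0, fun _ he => he.elim (fun h => h.1.le) fun h => h ▸ zero_le_one⟩ (Or.inr rfl)

theorem fkDist_le_one (δ : ℝ) (x y : X) : fkDist Φ δ x y ≤ 1 :=
  limsup_le_of_le (isCoboundedUnder_le_of_le _ fun t => fkGap_nonneg t δ x y)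
    (Eventually.of_forall fun t => fkGap_le_one t δ x y)

/-- Points at Feldman–Katok distance zero are matchable at every scale for all large times. -/
theorem eventually_matchable_of_rhoFK_eq_zero {x y : X} (hxy : rhoFK Φ x y = 0) {δ : ℝ}
    (hδ0 : 0 < δ) (hδ : δ ≤ 1) : ∀ᶠ t in atTop, Matchable Φ x y t δ δ := by
  have hne : {δ : ℝ | 0 < δ ∧ fkDist Φ δ x y < δ}.Nonempty :=
    ⟨2, two_pos, (fkDist_le_one 2 x y).trans_lt one_lt_two⟩
  obtain ⟨δ', ⟨-, hlt⟩, hδ'⟩ := exists_lt_of_csInf_lt hne (hxy.trans_lt hδ0)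
  have hbdd : IsBoundedUnder (· ≤ ·) atTop fun t => fkGap Φ t δ' x y :=
    isBoundedUnder_of ⟨1, fun t => fkGap_le_one t δ' x y⟩
  filter_upwards [eventually_lt_of_limsup_lt hlt hbdd, eventually_ge_atTop 0] with t hgap ht
  obtain ⟨e, he, hlt'⟩ := exists_lt_of_csInf_lt
    (s := {ε : ℝ | 0 < ε ∧ Matchable Φ x y t ε δ'} ∪ {1}) ⟨1, Or.inr rfl⟩ hgap
  rcases he with he | he
  · exact he.2.mono ht (hlt'.trans hδ').le hδ'.le
  · rw [mem_singleton_iff] at he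
    linarith

end Matching

/-- By invariance and Markov's inequality, few orbit segments visit a small set often. -/
theorem FlowInvariant.mul_measure_visits_le {X : Type*} [MetricSpace X] [MeasurableSpace X]
    [BorelSpace X] {Φ : ℝ → X → X} {μ : Measure X} [SFinite μ] (hΦ : IsFlow Φ)
    (hμ : FlowInvariant Φ μ) {S : Set X} (hS : MeasurableSet S) {t : ℝ} (a : ℝ≥0∞) :
    a * μ {x | a ≤ volume {s ∈ Icc 0 t | Φ s x ∈ S}} ≤ μ S * ENNReal.ofReal t := by
  have hE : MeasurableSet {p : X × ℝ | p.2 ∈ Icc 0 t ∧ Φ p.2 p.1 ∈ S} :=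
    (measurable_snd measurableSet_Icc).inter ((hΦ.cont.comp continuous_swap).measurable hS)
  refine (mul_meas_ge_le_lintegral (measurable_measure_prodMk_left hE) a).trans ?_
  rw [← Measure.prod_apply hE, Measure.prod_apply_symm hE]
  have hsec : ∀ s : ℝ, μ ((fun x => (x, s)) ⁻¹' {p : X × ℝ | p.2 ∈ Icc 0 t ∧ Φ p.2 p.1 ∈ S}) =
      (Icc 0 t).indicator (fun _ => μ S) s := by
    intro s
    by_cases hs : s ∈ Icc 0 t
    · rw [indicator_of_mem hs, ← (hμ s).measure_preimage hS.nullMeasurableSet]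
      congr 1
      ext x
      simp [hs.1, hs.2]
    · rw [indicator_of_notMem hs]
      convert measure_empty (μ := μ)
      ext x
      simp only [mem_preimage, mem_ofPred_eq, hs, false_and, mem_empty_iff_false]
  simp_rw [hsec]
  rw [lintegral_indicator_const measurableSet_Icc, Real.volume_Icc, sub_zero]

section CoveringNumbers

variable {X : Type*} {Φ : ℝ → X → X} {P : ℕ → Set X}

theorem fPart_lt {x y : X} {t ε η : ℝ} (hε : 0 < ε) (hεη : ε < η)
    (hM : PMatchable Φ P x y t ε) : fPart Φ P t x y < η :=
  (csInf_le (s := {ε : ℝ | 0 < ε ∧ PMatchable Φ P x y t ε} ∪ {1}) ⟨0, fun _ he =>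
    he.elim (fun h => h.1.le) fun h => h ▸ zero_le_one⟩ (Or.inl ⟨hε, hM⟩)).trans_lt hεη

theorem pBall_mono {t ε ε' : ℝ} (h : ε ≤ ε') (x : X) :
    PBall Φ P t ε x ⊆ PBall Φ P t ε' x :=
  fun _ hy => lt_of_lt_of_le hy h

variable [MeasurableSpace X] {μ : Measure X}

theorem Kt_eq_one {t ε : ℝ} {x : X}
    (hx : ENNReal.ofReal (1 - ε) < μ (PBall Φ P t ε x)) : Kt μ Φ P ε t = 1 := by
  refine le_antisymm (sInf_le ⟨{x}, by simpa using hx, by simp⟩) (le_sInf ?_)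
  rintro _ ⟨C, hC, rfl⟩
  have hne : C.card ≠ 0 := by
    rintro h0
    simp [Finset.card_eq_zero.1 h0] at hC
  exact Nat.one_le_cast.2 (Nat.one_le_iff_ne_zero.2 hne)

theorem betaU_eq_zero {ε : ℝ} (u : ℝ → ℝ)
    (h : ∀ᶠ t in atTop, Kt μ Φ P ε t = 1) : betaU μ Φ P u ε = 0 := by
  have heq : (fun t => ENNReal.log (Kt μ Φ P ε t) / (ENNReal.ofReal (u t) : EReal)) =ᶠ[atTop]
      fun _ => (0 : EReal) := by
    filter_upwards [h] with t ht
    rw [ht, ENNReal.log_one, EReal.zero_div]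
  rw [betaU, liminf_congr heq, liminf_const]

end CoveringNumbers

section Covers

variable {X : Type*} [MetricSpace X] [CompactSpace X] [MeasurableSpace X] [BorelSpace X]
  {Φ : ℝ → X → X} {μ : Measure X}

/-- The cells of a finite Borel partition contain, up to small measure, uniformly separated
compact sets. -/
theorem BPartition.exists_separated_set [IsFiniteMeasure μ] (P : BPartition X) {c : ℝ≥0∞}
    (hc : c ≠ 0) :
    ∃ K : Set X, MeasurableSet K ∧ μ Kᶜ ≤ c ∧ ∃ r : ℝ, 0 < r ∧
      ∀ p ∈ K, ∀ q ∈ K, dist p q < r → ∀ j, p ∈ P.cells j ↔ q ∈ P.cells j := by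
  obtain ⟨n, hn⟩ := P.finite
  obtain ⟨c', hc'0, hc'⟩ := ENNReal.exists_pos_sum_of_countable' hc ℕ
  choose L hLP hL hLμ using fun j => (P.measurable j).exists_isCompact_sdiff_lt
    (measure_ne_top μ _) (hc'0 j).ne'
  have hsep : ∀ i j, ∃ r : ℝ, 0 < r ∧ (i ≠ j → ∀ p ∈ L i, ∀ q ∈ L j, r ≤ dist p q) := by
    intro i j
    by_cases hij : i = j
    · exact ⟨1, one_pos, fun h => absurd hij h⟩
    · obtain ⟨r, hr, hdisj⟩ := ((P.disj hij).mono (hLP i) (hLP j)).exists_thickenings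
        (hL i) (hL j).isClosed
      refine ⟨r, hr, fun _ p hp q hq => ?_⟩
      by_contra! hlt
      refine disjoint_left.1 hdisj (Metric.mem_thickening_iff.2 ⟨p, hp, ?_⟩)
        (Metric.self_subset_thickening hr _ hq)
      rwa [dist_comm]
  choose r hr hrsep using hsep
  obtain ⟨r₀, hr₀, hr₀le⟩ : ∃ r₀ : ℝ, 0 < r₀ ∧ ∀ i < n, ∀ j < n, r₀ ≤ r i j := by
    have hev : ∀ᶠ a in 𝓝[>] (0 : ℝ), ∀ i ∈ Finset.range n, ∀ j ∈ Finset.range n, a ≤ r i j := by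
      simp only [Finset.eventually_all]
      intro i _ j _
      exact eventually_nhdsWithin_of_eventually_nhds (eventually_le_nhds (hr i j))
    obtain ⟨a, ha, ha0⟩ := (hev.and self_mem_nhdsWithin).exists
    exact ⟨a, ha0, fun i hi j hj => ha i (Finset.mem_range.2 hi) j (Finset.mem_range.2 hj)⟩
  have hlt : ∀ {i p}, p ∈ L i → i < n := by
    intro i p hp
    by_contra! hi
    simpa [hn i hi] using hLP i hp
  refine ⟨⋃ j, L j, MeasurableSet.iUnion fun j => (hL j).measurableSet, ?_, r₀, hr₀, ?_⟩
  · have hsub : (⋃ j, L j)ᶜ ⊆ ⋃ j, P.cells j \ L j := by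
      intro p hp
      obtain ⟨j, hj⟩ := mem_iUnion.1 (P.cover ▸ mem_univ p)
      exact mem_iUnion.2 ⟨j, hj, fun h => hp (mem_iUnion.2 ⟨j, h⟩)⟩
    exact (measure_mono hsub).trans ((measure_iUnion_le _).trans
      ((ENNReal.tsum_le_tsum fun j => (hLμ j).le).trans hc'.le))
  · intro p hp q hq hpq
    obtain ⟨i, hi⟩ := mem_iUnion.1 hp
    obtain ⟨j, hj⟩ := mem_iUnion.1 hq
    obtain rfl : i = j := by
      by_contra hij
      exact absurd (hpq.trans_le (hr₀le i (hlt hi) j (hlt hj))) (hrsep i j hij p hi q hj).not_gt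
    have hcell : ∀ {z}, z ∈ L i → ∀ l, z ∈ P.cells l ↔ l = i := fun {z} hz l =>
      ⟨fun h => by_contra fun hl => disjoint_left.1 (P.disj hl) h (hLP i hz),
        fun h => h ▸ hLP i hz⟩
    intro l
    rw [hcell hi, hcell hj]

/-- If almost all points are at Feldman–Katok distance zero from a point `z`, then for all large
times a single ball covers most of the space. -/
theorem exists_forall_exists_lt_measure_pBall [IsProbabilityMeasure μ] (hΦ : IsFlow Φ)
    (hμ : FlowInvariant Φ μ) {H : Set X} (hH : μ H = 1) {z : X}
    (hz : ∀ y ∈ H, rhoFK Φ z y = 0) (P : BPartition X) {η : ℝ} (hη0 : 0 < η) (hη : η ≤ 1) :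
    ∃ t₀ : ℝ, 1 < t₀ ∧ ∀ t, t₀ ≤ t →
      ∃ x, ENNReal.ofReal (1 - η) < μ (PBall Φ P.cells t η x) := by
  have hb0 : 0 < η / 20 := by positivity
  obtain ⟨K, hKm, hKμ, r, hr, hsep⟩ := P.exists_separated_set (μ := μ)
    (c := ENNReal.ofReal (η / 20 * (η / 4))) (ENNReal.ofReal_pos.2 (by positivity)).ne'
  set δ := min (η / 20) (r / 2)
  have hδ0 : 0 < δ := lt_min hb0 (by positivity)
  have hδη : δ ≤ η / 20 := min_le_left _ _
  have hδr : δ ≤ r / 2 := min_le_right _ _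
  let M : ℕ → Set X := fun n => {y | ∀ t : ℝ, (n : ℝ) ≤ t → Matchable Φ z y t δ δ}
  have hMmono : Monotone M := fun m n hmn y hy t ht =>
    hy t ((Nat.cast_le.2 hmn).trans ht)
  have hMH : H ⊆ ⋃ n, M n := by
    intro y hy
    obtain ⟨T, hT⟩ := eventually_atTop.1
      (eventually_matchable_of_rhoFK_eq_zero (hz y hy) hδ0 (by linarith))
    obtain ⟨n, hn⟩ := exists_nat_ge T
    exact mem_iUnion.2 ⟨n, fun t ht => hT t (hn.trans ht)⟩
  have hM1 : ENNReal.ofReal (1 - η / 4) < ⨆ n, μ (M n) := by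
    rw [← hMmono.measure_iUnion]
    refine lt_of_lt_of_le ?_ (hH.symm.le.trans (measure_mono hMH))
    rw [ENNReal.ofReal_lt_one]
    linarith
  obtain ⟨n, hn⟩ := lt_iSup_iff.1 hM1
  refine ⟨n + 2, by linarith [(Nat.cast_nonneg n : (0 : ℝ) ≤ n)], fun t ht => ?_⟩
  have hnt : (n : ℝ) ≤ t := by linarith
  have ht0 : 0 < t := by linarith [(Nat.cast_nonneg n : (0 : ℝ) ≤ n)]
  set V := {x | ENNReal.ofReal (η / 20 * t) ≤ volume {s ∈ Icc 0 t | Φ s x ∈ Kᶜ}}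
  have hV : μ V ≤ ENNReal.ofReal (η / 4) := by
    have h1 := hμ.mul_measure_visits_le hΦ hKm.compl (t := t) (ENNReal.ofReal (η / 20 * t))
    have h2 : μ Kᶜ * ENNReal.ofReal t ≤
        ENNReal.ofReal (η / 20 * t) * ENNReal.ofReal (η / 4) := by
      refine (mul_le_mul_left hKμ _).trans_eq ?_
      rw [← ENNReal.ofReal_mul (by positivity), ← ENNReal.ofReal_mul (by positivity)]
      congr 1
      ring
    exact (ENNReal.mul_le_mul_iff_right (ENNReal.ofReal_pos.2 (by positivity)).ne'
      ENNReal.ofReal_ne_top).1 (h1.trans h2)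
  have hG : ENNReal.ofReal (1 - η) < μ (M n \ V) := by
    refine lt_of_lt_of_le ?_ le_measure_sdiff
    rw [lt_tsub_iff_right]
    refine lt_of_le_of_lt ?_ hn
    refine (add_le_add le_rfl hV).trans ?_
    rw [← ENNReal.ofReal_add (by linarith) (by positivity)]
    exact ENNReal.ofReal_le_ofReal (by linarith)
  obtain ⟨x, hx⟩ : (M n \ V).Nonempty := nonempty_of_measure_ne_zero (ne_bot_of_gt hG)
  refine ⟨x, hG.trans_le (measure_mono fun y hy => ?_)⟩
  refine fPart_lt (ε := η / 2) (by positivity) (by linarith) ?_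
  exact pMatchable_of_matchable_of_matchable hΦ ht0 hδ0 (by linarith) hb0.le (by linarith)
    (by linarith) (by linarith) hKm
    (fun p hp q hq hpq => hsep p hp q hq (by linarith))
    (hx.1 t hnt) (hy.1 t hnt) (not_le.1 hx.2).le (not_le.1 hy.2).le

end Covers

instance BPartition.instNonempty {X : Type*} [MeasurableSpace X] : Nonempty (BPartition X) :=
  ⟨{ cells := fun j => if j = 0 then univ else ∅
     measurable := fun j => by split_ifs <;> simp
     disj := fun i j hij => by
      by_cases hi : i = 0
      · have hj : j ≠ 0 := fun h => hij (hi.trans h.symm)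
        simp [Function.onFun, hj]
      · simp [Function.onFun, hi]
     cover := eq_univ_of_forall fun x => mem_iUnion.2 ⟨0, by simp⟩
     finite := ⟨1, fun j hj => if_neg (by omega)⟩ }⟩

theorem stmt12 {X : Type*} [MetricSpace X] [CompactSpace X] [MeasurableSpace X] [BorelSpace X] (Φ : ℝ → X → X) (hΦ : IsFlow Φ)
    (μ : Measure X) [IsProbabilityMeasure μ] (hμ : FlowErgodic Φ μ)
    (H : Set X) (hHm : MeasurableSet H) (hH : μ H = 1)
    (hFK : ∀ x ∈ H, ∀ y ∈ H, rhoFK Φ x y = 0) :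
    (∀ P : BPartition X, ∀ ε : ℝ, 0 < ε → ∃ t₀ : ℝ, 1 < t₀ ∧
        ∀ t : ℝ, t₀ ≤ t → Kt μ Φ P.cells (15 * ε) t = 1) ∧
    (∀ u : ℝ → ℝ, (∀ s : ℝ, 0 ≤ s → 0 < u s) → MonotoneOn u (Set.Ici 0) →
        Set.SurjOn u (Set.Ici 0) (Set.Ioi 0) → ePhi μ Φ u = 0) := by
  have hne : H.Nonempty := nonempty_of_measure_ne_zero (μ := μ) (by simp [hH])
  obtain ⟨z, hzH⟩ := hne
  have hcover : ∀ P : BPartition X, ∀ ε : ℝ, 0 < ε → ∃ t₀ : ℝ, 1 < t₀ ∧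
      ∀ t : ℝ, t₀ ≤ t → Kt μ Φ P.cells ε t = 1 := by
    intro P ε hε
    obtain ⟨t₀, ht₀, hball⟩ := exists_forall_exists_lt_measure_pBall hΦ hμ.1 hH
      (fun y hy => hFK z hzH y hy) P (lt_min hε one_pos) (min_le_right ε 1)
    refine ⟨t₀, ht₀, fun t ht => ?_⟩
    obtain ⟨x, hx⟩ := hball t ht
    refine Kt_eq_one (x := x) (lt_of_le_of_lt ?_ (hx.trans_le
      (measure_mono (pBall_mono (min_le_left ε 1) x))))
    exact ENNReal.ofReal_le_ofReal (by linarith [min_le_left ε 1])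
  refine ⟨fun P ε hε => hcover P (15 * ε) (by positivity), fun u _ _ _ => ?_⟩
  have hzero : ∀ P : BPartition X, eUP μ Φ P.cells u = 0 := by
    intro P
    have heq : (fun ε => betaU μ Φ P.cells u ε) =ᶠ[𝓝[>] (0 : ℝ)] fun _ => (0 : EReal) := by
      filter_upwards [self_mem_nhdsWithin] with ε hε
      obtain ⟨t₀, -, ht₀⟩ := hcover P ε hε
      exact betaU_eq_zero u (eventually_atTop.2 ⟨t₀, ht₀⟩)
    rw [eUP, limsup_congr heq, limsup_const]
  simp only [ePhi, hzero, ciSup_const]
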